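/- Let f : A → B be a graph morphism between multigraphs such that f_P is surjective on part sets, let q : A → I be the coequalizer in Grphs of the kernel pair of f, and let q* : I* → B be the equalizer of the cokernel pair of f, with h : I → I* the unique morphism satisfying q* ∘ h ∘ q = f. Then the composite q* ∘ h : I → B is an isomorphism in Grphs; in particular, when f is an epimorphism, B is isomorphic to the coequalizer I of the kernel pair of f. -/

import Mathlib

/-- A multigraph: a vertex type, an edge type, and an incidence function
assigning to each edge an unordered pair of vertices. -/
structure Multigraph : Type 1 where
  V : Type
  E : Type
  ψ : E → Sym2 V

namespace Multigraph

/-- The part set of a multigraph: vertices together with edges. -/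
abbrev Part (G : Multigraph) : Type := G.V ⊕ G.E

/-- The incidence function extended to parts: a vertex `v` is incident to `{v,v}`. -/
def incid (G : Multigraph) : G.Part → Sym2 G.V
  | Sum.inl v => s(v, v)
  | Sum.inr e => G.ψ e

/-- A graph morphism: a function on part sets mapping vertices to vertices and
preserving incidence.  (The vertex map is recorded separately, but it is uniquely
determined by the part map.) -/
@[ext]
structure Hom (G H : Multigraph) where
  partMap : G.Part → H.Part
  vertMap : G.V → H.V
  partMap_vert : ∀ v : G.V, partMap (Sum.inl v) = Sum.inl (vertMap v)
  incid_partMap : ∀ p : G.Part, H.incid (partMap p) = (G.incid p).map vertMap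

/-- The identity graph morphism. -/
def Hom.id (G : Multigraph) : Hom G G where
  partMap := _root_.id
  vertMap := _root_.id
  partMap_vert := fun _ => rfl
  incid_partMap := fun p => by simp

/-- Composition of graph morphisms. -/
def Hom.comp {G H K : Multigraph} (g : Hom H K) (f : Hom G H) : Hom G K where
  partMap := g.partMap ∘ f.partMap
  vertMap := g.vertMap ∘ f.vertMap
  partMap_vert := fun v => by simp [f.partMap_vert, g.partMap_vert]
  incid_partMap := fun p => by
    simp [Function.comp, g.incid_partMap, f.incid_partMap, Sym2.map_map]

/-- A strict graph morphism: a graph morphism that moreover maps edges to edges. -/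
@[ext]
structure StrictHom (G H : Multigraph) extends Hom G H where
  edgeMap : G.E → H.E
  partMap_edge : ∀ e : G.E, partMap (Sum.inr e) = Sum.inr (edgeMap e)

/-- The identity strict graph morphism. -/
def StrictHom.id (G : Multigraph) : StrictHom G G where
  toHom := Hom.id G
  edgeMap := _root_.id
  partMap_edge := fun _ => rfl

/-- Composition of strict graph morphisms. -/
def StrictHom.comp {G H K : Multigraph} (g : StrictHom H K) (f : StrictHom G H) :
    StrictHom G K where
  toHom := g.toHom.comp f.toHom
  edgeMap := g.edgeMap ∘ f.edgeMap
  partMap_edge := fun e => by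
    simp [Hom.comp, f.partMap_edge, g.partMap_edge]

end Multigraph

/-!
Every part `p` is the image of the edge of the graph `edgeGraph` under some morphism, and if
`f p = f p'` then the ends can be matched so that the morphisms picking out `p` and `p'` agree
after `f`. They then factor through the kernel pair of `f`, so its coequalizer `q` identifies `p`
and `p'`. Hence `q` is constant on the fibres of the surjection `f` and factors through it, and
this factorization is inverse to `q* ∘ h`, because `q` and `f` can be cancelled on the right.
-/

theorem exists_eq_mk_of_sym2_map_eq {α β γ : Type*} {f : α → γ} {g : β → γ}
    {z : Sym2 α} {w : Sym2 β} (hzw : z.map f = w.map g) :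
    ∃ x y x' y', z = s(x, y) ∧ w = s(x', y') ∧ f x = g x' ∧ f y = g y' := by
  induction z, w using Sym2.inductionOn₂ with | _ x y x' y'
  rcases Sym2.eq_iff.1 hzw with ⟨hx, hy⟩ | ⟨hx, hy⟩
  · exact ⟨x, y, x', y', rfl, rfl, hx, hy⟩
  · exact ⟨x, y, y', x', rfl, Sym2.eq_swap, hx, hy⟩

namespace Multigraph

variable {A B C K : Multigraph}

namespace Hom

theorem ext_partMap {f g : Hom A B} (hfg : f.partMap = g.partMap) : f = g := by
  refine Hom.ext hfg (funext fun v => Sum.inl_injective (β := B.E) ?_)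
  rw [← f.partMap_vert, ← g.partMap_vert, hfg]

theorem comp_assoc {D : Multigraph} (h : Hom C D) (g : Hom B C) (f : Hom A B) :
    (h.comp g).comp f = h.comp (g.comp f) :=
  rfl

theorem id_comp (f : Hom A B) : (Hom.id B).comp f = f :=
  rfl

theorem eq_of_comp_eq_of_surjective {f : Hom A B} (hf : Function.Surjective f.partMap)
    {g h : Hom B C} (hgh : g.comp f = h.comp f) : g = h :=
  ext_partMap (hf.injective_comp_right (congrArg partMap hgh))

theorem vertMap_surjective {f : Hom A B} (hf : Function.Surjective f.partMap) :
    Function.Surjective f.vertMap := by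
  intro v
  obtain ⟨p, hp⟩ := hf (Sum.inl v)
  have hv : v ∈ (A.incid p).map f.vertMap := by
    rw [← f.incid_partMap, hp]
    exact Sym2.mem_mk_left v v
  obtain ⟨x, -, hx⟩ := Sym2.mem_map.1 hv
  exact ⟨x, hx⟩

theorem vertMap_factorsThrough {f : Hom A B} {m : Hom A K}
    (hm : m.partMap.FactorsThrough f.partMap) : m.vertMap.FactorsThrough f.vertMap := by
  intro x y hxy
  have hpart : m.partMap (Sum.inl x) = m.partMap (Sum.inl y) :=
    hm (by rw [f.partMap_vert, f.partMap_vert, hxy])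
  rw [m.partMap_vert, m.partMap_vert] at hpart
  exact Sum.inl_injective hpart

theorem exists_comp_eq_of_factorsThrough {f : Hom A B} (hf : Function.Surjective f.partMap)
    {m : Hom A K} (hm : m.partMap.FactorsThrough f.partMap) : ∃ g : Hom B K, g.comp f = m := by
  have hfV := vertMap_surjective hf
  let gP : B.Part → K.Part := m.partMap ∘ Function.surjInv hf
  let gV : B.V → K.V := m.vertMap ∘ Function.surjInv hfV
  have hgP (p : A.Part) : gP (f.partMap p) = m.partMap p := hm (Function.surjInv_eq hf _)
  have hgV (x : A.V) : gV (f.vertMap x) = m.vertMap x :=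
    vertMap_factorsThrough hm (Function.surjInv_eq hfV _)
  refine ⟨⟨gP, gV, hfV.forall.2 fun x => ?_, hf.forall.2 fun p => ?_⟩, ext_partMap (funext hgP)⟩
  · rw [← f.partMap_vert, hgP, m.partMap_vert, hgV]
  · rw [hgP, m.incid_partMap, f.incid_partMap, Sym2.map_map]
    exact Sym2.map_congr fun x _ => (hgV x).symm

end Hom

/-- The graph with two vertices joined by one edge. It represents the choice of a part together
with an ordering of its ends, so it detects parts the way a point detects elements of a set. -/
def edgeGraph : Multigraph where
  V := Bool
  E := Unit
  ψ := fun _ => s(false, true)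

/-- The morphism from `edgeGraph` that picks out the part `p` with its ends ordered as `x`, `y`;
the edge of `edgeGraph` is sent to a vertex when `p` is one. -/
def edgeHom (p : A.Part) (x y : A.V) (hp : A.incid p = s(x, y)) : Hom edgeGraph A where
  partMap := Sum.elim (fun b => Sum.inl (bif b then y else x)) (fun _ => p)
  vertMap := fun b => bif b then y else x
  partMap_vert := fun _ => rfl
  incid_partMap := Sum.rec (fun _ => rfl) (fun _ => hp)

theorem comp_edgeHom_eq_comp_edgeHom {f : Hom A C} {g : Hom B C} {p : A.Part} {p' : B.Part}
    {x y : A.V} {x' y' : B.V} (hp : A.incid p = s(x, y)) (hp' : B.incid p' = s(x', y'))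
    (hpp' : f.partMap p = g.partMap p') (hx : f.vertMap x = g.vertMap x')
    (hy : f.vertMap y = g.vertMap y') :
    f.comp (edgeHom p x y hp) = g.comp (edgeHom p' x' y' hp') := by
  refine Hom.ext_partMap (funext ?_)
  rintro ((_ | _) | _)
  · exact (f.partMap_vert x).trans ((congrArg Sum.inl hx).trans (g.partMap_vert x').symm)
  · exact (f.partMap_vert y).trans ((congrArg Sum.inl hy).trans (g.partMap_vert y').symm)
  · exact hpp'

theorem exists_edgeGraph_hom_comp_eq {f : Hom A C} {g : Hom B C} {p : A.Part} {p' : B.Part}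
    (hpp' : f.partMap p = g.partMap p') :
    ∃ (a : Hom edgeGraph A) (b : Hom edgeGraph B), f.comp a = g.comp b ∧
      a.partMap (Sum.inr ()) = p ∧ b.partMap (Sum.inr ()) = p' := by
  have hends : (A.incid p).map f.vertMap = (B.incid p').map g.vertMap := by
    rw [← f.incid_partMap, ← g.incid_partMap, hpp']
  obtain ⟨x, y, x', y', hp, hp', hx, hy⟩ := exists_eq_mk_of_sym2_map_eq hends
  exact ⟨edgeHom p x y hp, edgeHom p' x' y' hp',
    comp_edgeHom_eq_comp_edgeHom hp hp' hpp' hx hy, rfl, rfl⟩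

theorem Hom.partMap_factorsThrough {f : Hom A B} {m : Hom A K}
    (hm : ∀ a b : Hom edgeGraph A, f.comp a = f.comp b → m.comp a = m.comp b) :
    m.partMap.FactorsThrough f.partMap := by
  intro p p' hpp'
  obtain ⟨a, b, hab, rfl, rfl⟩ := exists_edgeGraph_hom_comp_eq hpp'
  exact congrFun (congrArg Hom.partMap (hm a b hab)) (Sum.inr ())

end Multigraph

open Multigraph in
theorem epi_iso_coequalizer_of_kernelPair_general
    {A B : Multigraph} {f : Hom A B} (hf : Function.Surjective f.partMap)
    {R : Multigraph} {p0 p1 : Hom R A}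
    (hkerUniv : ∀ (X : Multigraph) (a b : Hom X A), f.comp a = f.comp b →
      ∃! t : Hom X R, p0.comp t = a ∧ p1.comp t = b)
    {I : Multigraph} {q : Hom A I} (hq : q.comp p0 = q.comp p1)
    (hqUniv : ∀ (X : Multigraph) (m : Hom A X), m.comp p0 = m.comp p1 →
      ∃! t : Hom I X, t.comp q = m)
    {k : Hom I B} (hk : k.comp q = f) :
    ∃ g : Hom B I, g.comp k = Hom.id I ∧ k.comp g = Hom.id B := by
  have q_coequalizes (a b : Hom edgeGraph A) (hab : f.comp a = f.comp b) :
      q.comp a = q.comp b := by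
    obtain ⟨t, ⟨rfl, rfl⟩, -⟩ := hkerUniv edgeGraph a b hab
    rw [← Hom.comp_assoc, hq, Hom.comp_assoc]
  obtain ⟨g, hg⟩ : ∃ g : Hom B I, g.comp f = q :=
    Hom.exists_comp_eq_of_factorsThrough hf (Hom.partMap_factorsThrough q_coequalizes)
  have gk_comp_q : (g.comp k).comp q = q := by rw [Hom.comp_assoc, hk, hg]
  have kg_comp_f : (k.comp g).comp f = f := by rw [Hom.comp_assoc, hg, hk]
  exact ⟨g, (hqUniv I q hq).unique gk_comp_q (Hom.id_comp q),
    Hom.eq_of_comp_eq_of_surjective hf (kg_comp_f.trans (Hom.id_comp f).symm)⟩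

open Multigraph in
/-- If `f : A → B` is a graph morphism that is surjective on part sets (i.e. an
epimorphism in **Grphs**), `q : A → I` is a coequalizer of the kernel pair of `f`,
`q* : I* → B` is an equalizer of the cokernel pair of `f`, and `h : I → I*` is the
unique morphism with `q* ∘ h ∘ q = f`, then `q* ∘ h : I → B` is an isomorphism;
in particular `B` is isomorphic to the coequalizer `I` of the kernel pair of `f`. -/
theorem epi_iso_coequalizer_of_kernelPair
    (A B : Multigraph) (f : Hom A B)
    (hf : Function.Surjective f.partMap)
    -- the kernel pair of f : a pullback of f along itself
    (R : Multigraph) (p0 p1 : Hom R A)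
    (hker : f.comp p0 = f.comp p1)
    (hkerUniv : ∀ (X : Multigraph) (a b : Hom X A), f.comp a = f.comp b →
      ∃! t : Hom X R, p0.comp t = a ∧ p1.comp t = b)
    -- q : A → I, a coequalizer of the kernel pair
    (I : Multigraph) (q : Hom A I)
    (hq : q.comp p0 = q.comp p1)
    (hqUniv : ∀ (X : Multigraph) (m : Hom A X), m.comp p0 = m.comp p1 →
      ∃! t : Hom I X, t.comp q = m)
    -- the cokernel pair of f : a pushout of f along itself
    (C : Multigraph) (i0 i1 : Hom B C)
    (hcoker : i0.comp f = i1.comp f)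
    (hcokerUniv : ∀ (X : Multigraph) (j0 j1 : Hom B X), j0.comp f = j1.comp f →
      ∃! t : Hom C X, t.comp i0 = j0 ∧ t.comp i1 = j1)
    -- q* : I* → B, an equalizer of the cokernel pair
    (Istar : Multigraph) (qstar : Hom Istar B)
    (hqs : i0.comp qstar = i1.comp qstar)
    (hqsUniv : ∀ (X : Multigraph) (m : Hom X B), i0.comp m = i1.comp m →
      ∃! t : Hom X Istar, qstar.comp t = m)
    -- the unique comparison morphism h with q* ∘ h ∘ q = f
    (h : Hom I Istar)
    (hcomm : qstar.comp (h.comp q) = f) :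
    ∃ g : Hom B I,
      g.comp (qstar.comp h) = Hom.id I ∧ (qstar.comp h).comp g = Hom.id B := by
  exact epi_iso_coequalizer_of_kernelPair_general hf hkerUniv hq hqUniv hcomm
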